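/- Let m ≥ 2, let U ⊆ ℝ^m be an open box (a product of open intervals), and let h : U → ℝ be smooth and positive. Then the following are equivalent: (a) ∂²(log h)/∂x_i∂x_j ≡ 0 on U for all pairs i ≠ j; (b) for every closed box K = ∏_{k=1}^m [a_k,b_k] ⊆ U, every pair of distinct indices i ≠ j, and every p_i ∈ [a_i,b_i], p_j ∈ [a_j,b_j], the four quantities V_{st} (s,t ∈ {+,−}), defined as the integrals of h over ∏_k I_k with I_i = [p_i,b_i] if s = + and [a_i,p_i] if s = −, I_j = [p_j,b_j] if t = + and [a_j,p_j] if t = −, and I_k = [a_k,b_k] for k ∉ {i,j}, satisfy the implication: if V_{++} + V_{−+} = V_{+−} + V_{−−} and V_{++} = V_{−+}, then V_{++} = V_{−+} = V_{+−} = V_{−−}. -/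

import Mathlib

open MeasureTheory

noncomputable section

/-- Second mixed partial derivative `∂²(log h)/∂x_i∂x_j` at `x`. -/
def logpd2 {m : ℕ} (h : (Fin m → ℝ) → ℝ) (k l : Fin m) (x : Fin m → ℝ) : ℝ :=
  fderiv ℝ (fun y => fderiv ℝ (fun z => Real.log (h z)) y (Pi.single k (1:ℝ)))
    x (Pi.single l 1)

/-- The `h`-volume `V_{st}` of the subbox of `K = ∏_k [a_k,b_k]` determined by the signs
`s` (for coordinate `i`: `+` gives `[p,b_i]`, `−` gives `[a_i,p]`) and `t` (likewise for
coordinate `j` with `q`), the remaining factors being `[a_k,b_k]`. -/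
def subboxVol {m : ℕ} (h : (Fin m → ℝ) → ℝ) (i j : Fin m) (a b : Fin m → ℝ)
    (p q : ℝ) (s t : Bool) : ℝ :=
  ∫ x in Set.Icc
      (fun k => if k = i then (if s then p else a i)
        else if k = j then (if t then q else a j) else a k)
      (fun k => if k = i then (if s then b i else p)
        else if k = j then (if t then b j else q) else b k),
    h x


/-- Swapping the coordinates in `S` between two points is measure preserving. -/
lemma swap_mp {m : ℕ} (S : Finset (Fin m)) :
    MeasurePreserving (fun z : (Fin m → ℝ) × (Fin m → ℝ) =>
      (S.piecewise z.2 z.1, S.piecewise z.1 z.2)) := by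
  have e := volume_measurePreserving_arrowProdEquivProdArrow ℝ ℝ (Fin m)
  have hp : MeasurePreserving (fun (w : Fin m → ℝ × ℝ) k =>
      (fun k : Fin m => if k ∈ S then Prod.swap else (id : ℝ × ℝ → ℝ × ℝ)) k (w k)) := by
    apply volume_preserving_pi
    intro k
    by_cases hk : k ∈ S
    · simp only [hk, if_true]
      exact Measure.measurePreserving_swap
    · simp only [hk, if_false]
      exact MeasurePreserving.id _
  have := e.comp (hp.comp e.symm)
  convert this using 1
  funext z
  refine Prod.ext ?_ ?_ <;> funext k <;> by_cases hk : k ∈ S <;>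
    simp [hk, MeasurableEquiv.arrowProdEquivProdArrow, Equiv.arrowProdEquivProdArrow]

lemma swap_emb {m : ℕ} (S : Finset (Fin m)) :
    MeasurableEmbedding (fun z : (Fin m → ℝ) × (Fin m → ℝ) =>
      (S.piecewise z.2 z.1, S.piecewise z.1 z.2)) := by
  have hinv : Function.Involutive (fun z : (Fin m → ℝ) × (Fin m → ℝ) =>
      (S.piecewise z.2 z.1, S.piecewise z.1 z.2)) := by
    intro z
    refine Prod.ext ?_ ?_ <;> funext k <;> by_cases hk : k ∈ S <;> simp [hk]
  exact (MeasurableEquiv.ofInvolutive _ hinv (swap_mp S).measurable).measurableEmbedding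

lemma swap_int {m : ℕ} (S : Finset (Fin m)) (h : (Fin m → ℝ) → ℝ)
    (a1 b1 a2 b2 : Fin m → ℝ) :
    (∫ x in Set.Icc (S.piecewise a2 a1) (S.piecewise b2 b1), h x) *
      (∫ x in Set.Icc (S.piecewise a1 a2) (S.piecewise b1 b2), h x) =
    ∫ z in Set.Icc a1 b1 ×ˢ Set.Icc a2 b2,
      h (S.piecewise z.2 z.1) * h (S.piecewise z.1 z.2) := by
  rw [← setIntegral_prod_mul, ← Measure.volume_eq_prod]
  rw [← (swap_mp S).setIntegral_preimage_emb (swap_emb S) (fun z => h z.1 * h z.2)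
    (Set.Icc (S.piecewise a2 a1) (S.piecewise b2 b1) ×ˢ
      Set.Icc (S.piecewise a1 a2) (S.piecewise b1 b2))]
  congr 2
  ext z
  simp only [Set.mem_preimage, Set.mem_prod, Set.mem_Icc, Pi.le_def]
  constructor
  · rintro ⟨⟨h1, h2⟩, h3, h4⟩
    refine ⟨⟨fun k => ?_, fun k => ?_⟩, fun k => ?_, fun k => ?_⟩ <;>
      have h1 := h1 k <;> have h2 := h2 k <;> have h3 := h3 k <;> have h4 := h4 k <;>
      by_cases hk : k ∈ S <;> simp [hk] at h1 h2 h3 h4 <;> assumption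
  · rintro ⟨⟨h1, h2⟩, h3, h4⟩
    refine ⟨⟨fun k => ?_, fun k => ?_⟩, fun k => ?_, fun k => ?_⟩ <;>
      have h1 := h1 k <;> have h2 := h2 k <;> have h3 := h3 k <;> have h4 := h4 k <;>
      by_cases hk : k ∈ S <;> simp [hk] <;> assumption

open Function in
lemma swap_mid {m : ℕ} (h : (Fin m → ℝ) → ℝ) (a1 b1 a2 b2 : Fin m → ℝ) (i : Fin m) :
    (∫ x in Set.Icc (update a1 i (a2 i)) (update b1 i (b2 i)), h x) *
      (∫ x in Set.Icc (update a2 i (a1 i)) (update b2 i (b1 i)), h x) =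
    ∫ z in Set.Icc a1 b1 ×ˢ Set.Icc a2 b2,
      h (update z.1 i (z.2 i)) * h (update z.2 i (z.1 i)) := by
  simpa only [Finset.piecewise_singleton] using swap_int {i} h a1 b1 a2 b2

open Function in
lemma swap_two {m : ℕ} (h : (Fin m → ℝ) → ℝ) (a1 b1 a2 b2 : Fin m → ℝ) (i j : Fin m) :
    (∫ x in Set.Icc (update (update a1 i (a2 i)) j (a2 j)) (update (update b1 i (b2 i)) j (b2 j)), h x) *
      (∫ x in Set.Icc (update (update a2 i (a1 i)) j (a1 j)) (update (update b2 i (b1 i)) j (b1 j)), h x) =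
    ∫ z in Set.Icc a1 b1 ×ˢ Set.Icc a2 b2,
      h (update (update z.1 i (z.2 i)) j (z.2 j)) * h (update (update z.2 i (z.1 i)) j (z.1 j)) := by
  simpa only [Finset.piecewise_insert, Finset.piecewise_singleton] using
    swap_int {j, i} h a1 b1 a2 b2

section vols
open Function
variable {m : ℕ} (h : (Fin m → ℝ) → ℝ) (i j : Fin m) (a b : Fin m → ℝ) (p q : ℝ)

lemma vol_tt (_ : i ≠ j) : subboxVol h i j a b p q true true =
    ∫ x in Set.Icc (update (update a j q) i p) b, h x := by
  unfold subboxVol; congr 3 <;> funext k <;> by_cases h1 : k = i <;> by_cases h2 : k = j <;>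
    simp_all
lemma vol_ft (hij : i ≠ j) : subboxVol h i j a b p q false true =
    ∫ x in Set.Icc (update a j q) (update b i p), h x := by
  unfold subboxVol; congr 3 <;> funext k <;> by_cases h1 : k = i <;> by_cases h2 : k = j <;>
    simp_all
lemma vol_tf (hij : i ≠ j) : subboxVol h i j a b p q true false =
    ∫ x in Set.Icc (update a i p) (update b j q), h x := by
  unfold subboxVol; congr 3 <;> funext k <;> by_cases h1 : k = i <;> by_cases h2 : k = j <;>
    simp_all
lemma vol_ff (_ : i ≠ j) : subboxVol h i j a b p q false false =
    ∫ x in Set.Icc a (update (update b j q) i p), h x := by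
  unfold subboxVol; congr 3 <;> funext k <;> by_cases h1 : k = i <;> by_cases h2 : k = j <;>
    simp_all

/-- The four products as integrals over the same set. -/
lemma prod_id (hij : i ≠ j) :
    subboxVol h i j a b p q true true * subboxVol h i j a b p q false false =
    ∫ z in Set.Icc (update (update a j q) i p) b ×ˢ Set.Icc a (update (update b j q) i p),
      h z.1 * h z.2 := by
  rw [vol_tt _ _ _ _ _ _ _ hij, vol_ff _ _ _ _ _ _ _ hij, ← setIntegral_prod_mul]; rfl

lemma prod_i (hij : i ≠ j) :
    subboxVol h i j a b p q false true * subboxVol h i j a b p q true false =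
    ∫ z in Set.Icc (update (update a j q) i p) b ×ˢ Set.Icc a (update (update b j q) i p),
      h (update z.1 i (z.2 i)) * h (update z.2 i (z.1 i)) := by
  rw [← swap_mid, vol_ft _ _ _ _ _ _ _ hij, vol_tf _ _ _ _ _ _ _ hij]
  congr 4 <;> funext k <;> by_cases h1 : k = i <;> by_cases h2 : k = j <;>
    simp_all

lemma prod_j (hij : i ≠ j) :
    subboxVol h i j a b p q true false * subboxVol h i j a b p q false true =
    ∫ z in Set.Icc (update (update a j q) i p) b ×ˢ Set.Icc a (update (update b j q) i p),
      h (update z.1 j (z.2 j)) * h (update z.2 j (z.1 j)) := by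
  rw [← swap_mid, vol_ft _ _ _ _ _ _ _ hij, vol_tf _ _ _ _ _ _ _ hij]
  congr 4 <;> funext k <;> by_cases h1 : k = i <;> by_cases h2 : k = j <;>
    simp_all

lemma prod_ij (hij : i ≠ j) :
    subboxVol h i j a b p q false false * subboxVol h i j a b p q true true =
    ∫ z in Set.Icc (update (update a j q) i p) b ×ˢ Set.Icc a (update (update b j q) i p),
      h (update (update z.1 i (z.2 i)) j (z.2 j)) *
        h (update (update z.2 i (z.1 i)) j (z.1 j)) := by
  rw [← swap_two, vol_tt _ _ _ _ _ _ _ hij, vol_ff _ _ _ _ _ _ _ hij]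
  congr 4 <;> funext k <;> by_cases h1 : k = i <;> by_cases h2 : k = j <;>
    simp_all

end vols

section smooth
open Function
variable {m : ℕ}

lemma contDiffOn_pd {U : Set (Fin m → ℝ)} (hU : IsOpen U) {f : (Fin m → ℝ) → ℝ}
    (hf : ContDiffOn ℝ (⊤ : ℕ∞) f U) (v : Fin m → ℝ) :
    ContDiffOn ℝ (⊤ : ℕ∞) (fun x => fderiv ℝ f x v) U := by
  have h1 : ContDiffOn ℝ (⊤ : ℕ∞) (fderiv ℝ f) U :=
    hf.fderiv_of_isOpen hU (by simp)
  exact h1.clm_apply contDiffOn_const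

lemma diffAt {U : Set (Fin m → ℝ)} (hU : IsOpen U) {f : (Fin m → ℝ) → ℝ}
    (hf : ContDiffOn ℝ (⊤ : ℕ∞) f U) {x : Fin m → ℝ} (hx : x ∈ U) :
    DifferentiableAt ℝ f x :=
  (hf.differentiableOn (by simp)).differentiableAt (hU.mem_nhds hx)

lemma hasDerivAt_upd {f : (Fin m → ℝ) → ℝ} {x : Fin m → ℝ} {i : Fin m} {s : ℝ}
    (hf : DifferentiableAt ℝ f (update x i s)) :
    HasDerivAt (fun s => f (update x i s)) (fderiv ℝ f (update x i s) (Pi.single i 1)) s :=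
  hf.hasFDerivAt.comp_hasDerivAt s (hasDerivAt_update x i s)

lemma logpd2_eq {U : Set (Fin m → ℝ)} (hU : IsOpen U) {h : (Fin m → ℝ) → ℝ}
    (hsm : ContDiffOn ℝ (⊤ : ℕ∞) h U) (hpos : ∀ x ∈ U, 0 < h x) (i j : Fin m)
    {x : Fin m → ℝ} (hx : x ∈ U) :
    logpd2 h i j x * (h x) ^ 2 =
      h x * fderiv ℝ (fun y => fderiv ℝ h y (Pi.single i 1)) x (Pi.single j 1) -
        fderiv ℝ h x (Pi.single i 1) * fderiv ℝ h x (Pi.single j 1) := by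
  have hne := (hpos x hx).ne'
  have hL : ContDiffOn ℝ (⊤ : ℕ∞) (fun z => Real.log (h z)) U :=
    hsm.log fun x hx => (hpos x hx).ne'
  have e0 : ∀ y ∈ U, fderiv ℝ h y (Pi.single i 1) =
      h y * fderiv ℝ (fun z => Real.log (h z)) y (Pi.single i (1:ℝ)) := by
    intro y hy
    have hy' := (hpos y hy).ne'
    rw [((diffAt hU hsm hy).hasFDerivAt.log hy').fderiv]
    simp [hy']
  have e1 : (fun y => fderiv ℝ h y (Pi.single i 1)) =ᶠ[nhds x]
      fun y => h y * fderiv ℝ (fun z => Real.log (h z)) y (Pi.single i (1:ℝ)) := by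
    filter_upwards [hU.mem_nhds hx] with y hy using e0 y hy
  have hd := (diffAt hU hsm hx).hasFDerivAt.fun_mul
    (diffAt hU (contDiffOn_pd hU hL (Pi.single i 1)) hx).hasFDerivAt
  unfold logpd2
  rw [e1.fderiv_eq, hd.fderiv, e0 x hx]
  simp
  ring

lemma split_of_logpd2 (I : Fin m → Set ℝ) (hIopen : ∀ k, IsOpen (I k))
    (hIconn : ∀ k, IsPreconnected (I k)) (h : (Fin m → ℝ) → ℝ)
    (hsm : ContDiffOn ℝ (⊤ : ℕ∞) h (Set.univ.pi I)) (hpos : ∀ x ∈ Set.univ.pi I, 0 < h x)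
    (i : Fin m) (H : ∀ j, i ≠ j → ∀ x ∈ Set.univ.pi I, logpd2 h i j x = 0)
    {u v : Fin m → ℝ} (hu : u ∈ Set.univ.pi I) (hv : v ∈ Set.univ.pi I) :
    h (update u i (v i)) * h (update v i (u i)) = h u * h v := by
  have hU : IsOpen (Set.univ.pi I) := isOpen_set_pi Set.finite_univ fun k _ => hIopen k
  have hconv : Convex ℝ (Set.univ.pi I) := convex_pi fun k _ => (hIconn k).ordConnected.convex
  have hL : ContDiffOn ℝ (⊤ : ℕ∞) (fun z => Real.log (h z)) (Set.univ.pi I) :=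
    hsm.log fun x hx => (hpos x hx).ne'
  set φ := fun y => fderiv ℝ (fun z => Real.log (h z)) y (Pi.single i (1:ℝ)) with hφ
  have hφd : ContDiffOn ℝ (⊤ : ℕ∞) φ (Set.univ.pi I) := contDiffOn_pd hU hL _
  have hconst : ∀ x ∈ Set.univ.pi I, ∀ y ∈ Set.univ.pi I, x i = y i → φ x = φ y := by
    intro x hx y hy hxy
    have hmem : ∀ t ∈ Set.Icc (0:ℝ) 1, AffineMap.lineMap x y t ∈ Set.univ.pi I :=
      fun t ht => hconv.lineMap_mem hx hy ht
    have hder : ∀ t ∈ Set.Icc (0:ℝ) 1,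
        HasDerivAt (fun t : ℝ => φ (AffineMap.lineMap x y t)) 0 t := by
      intro t ht
      have h1 := (diffAt hU hφd (hmem t ht)).hasFDerivAt.comp_hasDerivAt t
        (AffineMap.hasDerivAt_lineMap (a := x) (b := y) (x := t))
      refine h1.congr_deriv ?_
      rw [← Finset.univ_sum_single (y - x), map_sum]
      apply Finset.sum_eq_zero
      intro k _
      by_cases hk : k = i
      · subst hk; simp [hxy]
      · have : (Pi.single k ((y - x) k) : Fin m → ℝ) = ((y - x) k) • Pi.single k 1 := by
          rw [← Pi.single_smul]; simp
        rw [this, map_smul]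
        have := H k (Ne.symm hk) _ (hmem t ht)
        unfold logpd2 at this
        simp only [hφ]
        rw [this, smul_zero]
    obtain ⟨c, hc, hc'⟩ := exists_hasDerivAt_eq_slope
      (fun t : ℝ => φ (AffineMap.lineMap x y t)) (fun _ => 0) (zero_lt_one)
      (fun t ht => (hder t ht).continuousAt.continuousWithinAt)
      (fun t ht => hder t (Set.Ioo_subset_Icc_self ht))
    simp at hc'
    linarith
  have hmu : ∀ w ∈ Set.univ.pi I, ∀ s ∈ I i, update w i s ∈ Set.univ.pi I := by
    intro w hw s hs k _
    by_cases hk : k = i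
    · subst hk; simpa using hs
    · simpa [hk] using hw k trivial
  have hF : ∀ s ∈ I i, HasDerivAt
      (fun s => Real.log (h (update u i s)) - Real.log (h (update v i s))) 0 s := by
    intro s hs
    have := (hasDerivAt_upd (diffAt hU hL (hmu u hu s hs))).sub
      (hasDerivAt_upd (diffAt hU hL (hmu v hv s hs)))
    refine this.congr_deriv ?_
    rw [sub_eq_zero]
    exact hconst _ (hmu u hu s hs) _ (hmu v hv s hs) (by simp)
  have key := (hIopen i).is_const_of_deriv_eq_zero (hIconn i)
    (fun s hs => (hF s hs).differentiableAt.differentiableWithinAt)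
    (fun s hs => (hF s hs).deriv) (hu i trivial) (hv i trivial)
  simp only [update_eq_self] at key
  have p1 := hpos _ hu
  have p2 := hpos _ hv
  have p3 := hpos _ (hmu u hu _ (hv i trivial))
  have p4 := hpos _ (hmu v hv _ (hu i trivial))
  apply Real.log_injOn_pos (Set.mem_Ioi.2 (mul_pos p3 p4)) (Set.mem_Ioi.2 (mul_pos p1 p2))
  rw [Real.log_mul p3.ne' p4.ne', Real.log_mul p1.ne' p2.ne']
  linarith

/-- Pointwise positivity of the symmetrised cross difference. -/
lemma cross_pos {a b : Fin m → ℝ} {h hi hj hij : (Fin m → ℝ) → ℝ} {i j : Fin m} (hne : i ≠ j)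
    (d1 : ∀ x ∈ Set.Icc a b, DifferentiableAt ℝ h x)
    (e1 : ∀ x ∈ Set.Icc a b, fderiv ℝ h x (Pi.single i 1) = hi x)
    (e2 : ∀ x ∈ Set.Icc a b, fderiv ℝ h x (Pi.single j 1) = hj x)
    (d2 : ∀ x ∈ Set.Icc a b, DifferentiableAt ℝ hi x)
    (e3 : ∀ x ∈ Set.Icc a b, fderiv ℝ hi x (Pi.single j 1) = hij x) (σ : ℝ)
    (hσ : ∀ x ∈ Set.Icc a b, ∀ y ∈ Set.Icc a b, ∀ z ∈ Set.Icc a b, ∀ w ∈ Set.Icc a b,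
      0 < σ * (h x * hij y - hi z * hj w))
    {u v : Fin m → ℝ} (hu : u ∈ Set.Icc a b) (hv : v ∈ Set.Icc a b)
    (hi' : v i < u i) (hj' : v j < u j) :
    0 < σ * (h u * h v + h (update (update u i (v i)) j (v j)) * h (update (update v i (u i)) j (u j))
      - h (update u i (v i)) * h (update v i (u i)) - h (update u j (v j)) * h (update v j (u j))) := by
  have mem : ∀ w ∈ Set.Icc a b, ∀ k, ∀ s ∈ Set.Icc (v k) (u k), update w k s ∈ Set.Icc a b := by
    intro w hw k s hs
    refine ⟨fun l => ?_, fun l => ?_⟩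
    · by_cases hl : l = k
      · subst hl; simpa using (hv.1 l).trans hs.1
      · simpa [hl] using hw.1 l
    · by_cases hl : l = k
      · subst hl; simpa using hs.2.trans (hu.2 l)
      · simpa [hl] using hw.2 l
  have vi : v i ∈ Set.Icc (v i) (u i) := ⟨le_rfl, hi'.le⟩
  have vj : v j ∈ Set.Icc (v j) (u j) := ⟨le_rfl, hj'.le⟩
  have ui : u i ∈ Set.Icc (v i) (u i) := ⟨hi'.le, le_rfl⟩
  have uj : u j ∈ Set.Icc (v j) (u j) := ⟨hj'.le, le_rfl⟩
  have D1 : ∀ w ∈ Set.Icc a b, ∀ s ∈ Set.Icc (v i) (u i), ∀ t ∈ Set.Icc (v j) (u j),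
      HasDerivAt (fun s => h (update (update w j t) i s)) (hi (update (update w j t) i s)) s := by
    intro w hw s hs t ht
    have hm := mem _ (mem w hw j t ht) i s hs
    rw [← e1 _ hm]
    exact hasDerivAt_upd (d1 _ hm)
  have D2 : ∀ w ∈ Set.Icc a b, ∀ t ∈ Set.Icc (v j) (u j),
      HasDerivAt (fun t => h (update w j t)) (hj (update w j t)) t := by
    intro w hw t ht
    have hm := mem w hw j t ht
    rw [← e2 _ hm]
    exact hasDerivAt_upd (d1 _ hm)
  have D3 : ∀ w ∈ Set.Icc a b, ∀ t ∈ Set.Icc (v j) (u j),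
      HasDerivAt (fun t => hi (update w j t)) (hij (update w j t)) t := by
    intro w hw t ht
    have hm := mem w hw j t ht
    rw [← e3 _ hm]
    exact hasDerivAt_upd (d2 _ hm)
  set c := h (update (update u i (v i)) j (v j)) with hc
  have DE : ∀ s ∈ Set.Icc (v i) (u i), HasDerivAt
      (fun s => h (update (update u j (u j)) i s) * h v + h (update (update v j (u j)) i s) * c
        - h (update (update u j (v j)) i s) * h (update v j (u j))
        - h (update (update v j (v j)) i s) * h (update (update u i (v i)) j (u j)))
      (hi (update (update u j (u j)) i s) * h v + hi (update (update v j (u j)) i s) * c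
        - hi (update (update u j (v j)) i s) * h (update v j (u j))
        - hi (update (update v j (v j)) i s) * h (update (update u i (v i)) j (u j))) s := by
    intro s hs
    exact ((((D1 u hu s hs _ uj).mul_const _).add ((D1 v hv s hs _ uj).mul_const _)).sub
      ((D1 u hu s hs _ vj).mul_const _)).sub ((D1 v hv s hs _ vj).mul_const _)
  obtain ⟨ξ, hξ, hξ'⟩ := exists_hasDerivAt_eq_slope _ _ hi'
    (fun s hs => (DE s hs).continuousAt.continuousWithinAt)
    (fun s hs => DE s (Set.Ioo_subset_Icc_self hs))
  have hξI := Set.Ioo_subset_Icc_self hξ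
  have DF : ∀ t ∈ Set.Icc (v j) (u j), HasDerivAt
      (fun t => hi (update (update u i ξ) j t) * h v + hi (update (update v i ξ) j t) * c
        - hi (update (update u j (v j)) i ξ) * h (update v j t)
        - hi (update (update v j (v j)) i ξ) * h (update (update u i (v i)) j t))
      (hij (update (update u i ξ) j t) * h v + hij (update (update v i ξ) j t) * c
        - hi (update (update u j (v j)) i ξ) * hj (update v j t)
        - hi (update (update v j (v j)) i ξ) * hj (update (update u i (v i)) j t)) t := by
    intro t ht
    exact ((((D3 _ (mem u hu i ξ hξI) t ht).mul_const _).add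
      ((D3 _ (mem v hv i ξ hξI) t ht).mul_const _)).sub
      ((D2 v hv t ht).const_mul _)).sub ((D2 _ (mem u hu i _ vi) t ht).const_mul _)
  obtain ⟨η, hη, hη'⟩ := exists_hasDerivAt_eq_slope _ _ hj'
    (fun s hs => (DF s hs).continuousAt.continuousWithinAt)
    (fun s hs => DF s (Set.Ioo_subset_Icc_self hs))
  have hηI := Set.Ioo_subset_Icc_self hη
  have hcm : update (update u i (v i)) j (v j) ∈ Set.Icc a b := mem _ (mem u hu i _ vi) j _ vj
  have P1 := hσ v hv _ (mem _ (mem u hu i ξ hξI) j η hηI)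
    _ (mem _ (mem u hu j _ vj) i ξ hξI) _ (mem v hv j η hηI)
  have P2 := hσ _ hcm _ (mem _ (mem v hv i ξ hξI) j η hηI)
    _ (mem _ (mem v hv j _ vj) i ξ hξI) _ (mem _ (mem u hu i _ vi) j η hηI)
  rw [← hc] at P2
  have hdi : 0 < u i - v i := sub_pos.2 hi'
  have hdj : 0 < u j - v j := sub_pos.2 hj'
  rw [eq_div_iff hdi.ne'] at hξ'
  rw [eq_div_iff hdj.ne'] at hη'
  have cm : ∀ (w : Fin m → ℝ) s t, update (update w j t) i s = update (update w i s) j t :=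
    fun w s t => update_comm hne.symm t s w
  simp only [cm, update_eq_self] at hξ' hη' P1 P2
  have su : ∀ s, update (update u i s) j (u j) = update u i s := by
    intro s; rw [← cm, update_eq_self]
  have sv : ∀ s, update (update v i s) j (v j) = update v i s := by
    intro s; rw [← cm, update_eq_self]
  simp only [su, sv, ← hc] at hξ' hη' P1 P2
  have hpos := mul_pos (mul_pos (add_pos P1 P2) hdj) hdi
  refine lt_of_lt_of_eq hpos ?_
  linear_combination (σ * (u i - v i)) * hη' + σ * hξ'

end smooth

section median
open Function
variable {m : ℕ}

lemma ae_ne (i : Fin m) (p : ℝ) : ∀ᵐ x : Fin m → ℝ, x i ≠ p := by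
  have : (volume : Measure (Fin m → ℝ)) {f | f i = p} = 0 :=
    Measure.pi_hyperplane (fun _ => (volume : Measure ℝ)) i p
  rw [ae_iff]
  simpa using this

lemma null_box (h : (Fin m → ℝ) → ℝ) {l r : Fin m → ℝ} {i : Fin m} (hi : r i ≤ l i) :
    ∫ x in Set.Icc l r, h x = 0 := by
  apply setIntegral_measure_zero
  apply measure_mono_null (t := {x : Fin m → ℝ | x i = l i})
  · intro x hx
    exact le_antisymm ((hx.2 i).trans hi) (hx.1 i)
  · exact Measure.pi_hyperplane (fun _ => (volume : Measure ℝ)) i _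

lemma lower_eq (a b : Fin m → ℝ) (i : Fin m) {p : ℝ} (hp : p ∈ Set.Icc (a i) (b i)) :
    Set.Icc a (update b i p) = Set.Icc a b ∩ {x | x i ≤ p} := by
  ext x
  simp only [Set.mem_Icc, Set.mem_inter_iff, Set.mem_ofPred_eq, le_update_iff]
  constructor
  · rintro ⟨h1, h2, h3⟩
    refine ⟨⟨h1, fun k => ?_⟩, h2⟩
    by_cases hk : k = i
    · subst hk; exact h2.trans hp.2
    · exact h3 k hk
  · rintro ⟨⟨h1, h2⟩, h3⟩
    exact ⟨h1, h3, fun k _ => h2 k⟩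

lemma upper_ae (a b : Fin m → ℝ) (i : Fin m) {p : ℝ} (hp : p ∈ Set.Icc (a i) (b i)) :
    (Set.Icc (update a i p) b : Set (Fin m → ℝ)) =ᵐ[volume]
      (Set.Icc a b \ {x | x i ≤ p} : Set (Fin m → ℝ)) := by
  filter_upwards [ae_ne i p] with x hx
  apply propext
  change x ∈ Set.Icc (update a i p) b ↔ x ∈ Set.Icc a b \ {x | x i ≤ p}
  simp only [Set.mem_Icc, Set.mem_sdiff, Set.mem_ofPred_eq, update_le_iff, not_le]
  constructor
  · rintro ⟨⟨h1, h2⟩, h3⟩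
    refine ⟨⟨fun k => ?_, h3⟩, lt_of_le_of_ne h1 (Ne.symm hx)⟩
    by_cases hk : k = i
    · subst hk; exact hp.1.trans h1
    · exact h2 k hk
  · rintro ⟨⟨h1, h2⟩, h3⟩
    exact ⟨⟨h3.le, fun k _ => h1 k⟩, h2⟩

lemma meas_half (i : Fin m) (p : ℝ) : MeasurableSet {x : Fin m → ℝ | x i ≤ p} :=
  measurableSet_le (measurable_pi_apply i) measurable_const

lemma half_add {h : (Fin m → ℝ) → ℝ} {a b : Fin m → ℝ} (hint : IntegrableOn h (Set.Icc a b))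
    (i : Fin m) {p : ℝ} (hp : p ∈ Set.Icc (a i) (b i)) :
    (∫ x in Set.Icc (update a i p) b, h x) + ∫ x in Set.Icc a (update b i p), h x =
      ∫ x in Set.Icc a b, h x := by
  rw [setIntegral_congr_set (upper_ae a b i hp), lower_eq a b i hp, add_comm]
  exact integral_inter_add_sdiff (meas_half i p) hint

lemma cont_half {h : (Fin m → ℝ) → ℝ} {a b : Fin m → ℝ} (hint : IntegrableOn h (Set.Icc a b))
    (i : Fin m) : Continuous fun p : ℝ => ∫ x in Set.Icc a b ∩ {x | x i ≤ p}, h x := by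
  have e : (fun p : ℝ => ∫ x in Set.Icc a b ∩ {x | x i ≤ p}, h x) =
      fun p => ∫ x in Set.Icc a b, Set.indicator {x : Fin m → ℝ | x i ≤ p} h x := by
    funext p
    rw [setIntegral_indicator (meas_half i p)]
  rw [e, continuous_iff_continuousAt]
  intro p0
  apply continuousAt_of_dominated (bound := fun x => ‖h x‖)
  · exact Filter.Eventually.of_forall fun p =>
      hint.aestronglyMeasurable.indicator (meas_half i p)
  · exact Filter.Eventually.of_forall fun p => Filter.Eventually.of_forall fun x =>
      norm_indicator_le_norm_self _ _
  · exact hint.norm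
  · filter_upwards [ae_restrict_of_ae (ae_ne i p0)] with x hx
    rcases lt_or_gt_of_ne hx with hlt | hgt
    · have : (fun p : ℝ => Set.indicator {x : Fin m → ℝ | x i ≤ p} h x) =ᶠ[nhds p0]
          fun _ => h x := by
        filter_upwards [lt_mem_nhds hlt] with p hp
        exact Set.indicator_of_mem (s := {x : Fin m → ℝ | x i ≤ p}) hp.le h
      exact continuousAt_const.congr this.symm
    · have : (fun p : ℝ => Set.indicator {x : Fin m → ℝ | x i ≤ p} h x) =ᶠ[nhds p0]
          fun _ => 0 := by
        filter_upwards [gt_mem_nhds hgt] with p hp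
        exact Set.indicator_of_notMem (s := {x : Fin m → ℝ | x i ≤ p}) (not_le.2 hp) h
      exact continuousAt_const.congr this.symm

lemma median {h : (Fin m → ℝ) → ℝ} {a b : Fin m → ℝ} (hint : IntegrableOn h (Set.Icc a b))
    (hnn : ∀ x ∈ Set.Icc a b, 0 ≤ h x) (i : Fin m) (hab : a i ≤ b i) :
    ∃ p ∈ Set.Icc (a i) (b i),
      ∫ x in Set.Icc (update a i p) b, h x = ∫ x in Set.Icc a (update b i p), h x := by
  have hT : 0 ≤ ∫ x in Set.Icc a b, h x := setIntegral_nonneg measurableSet_Icc hnn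
  have hiv := intermediate_value_Icc hab (cont_half hint i).continuousOn
  have e0 : ∫ x in Set.Icc a b ∩ {x | x i ≤ a i}, h x = 0 := by
    rw [← lower_eq a b i ⟨le_rfl, hab⟩]
    exact null_box h (i := i) (by simp)
  have e1 : ∫ x in Set.Icc a b ∩ {x | x i ≤ b i}, h x = ∫ x in Set.Icc a b, h x := by
    rw [← lower_eq a b i ⟨hab, le_rfl⟩, update_eq_self]
  rw [e0, e1] at hiv
  obtain ⟨p, hp, hpe⟩ := hiv (show (∫ x in Set.Icc a b, h x) / 2 ∈ _ from
    ⟨by linarith, by linarith⟩)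
  refine ⟨p, hp, ?_⟩
  have h1 := half_add hint i hp
  simp only at hpe
  rw [← lower_eq a b i hp] at hpe
  linarith

lemma int_pos {X : Type*} [TopologicalSpace X] [MeasurableSpace X] (μ : Measure X)
    [μ.IsOpenPosMeasure] {f : X → ℝ} {s o : Set X} (hs : MeasurableSet s)
    (hf : IntegrableOn f s μ) (hnn : ∀ x ∈ s, 0 ≤ f x) (ho : IsOpen o) (hne : o.Nonempty)
    (hos : o ⊆ s) (hpos : ∀ x ∈ o, 0 < f x) : 0 < ∫ x in s, f x ∂μ := by
  rw [setIntegral_pos_iff_support_of_nonneg_ae]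
  · exact (ho.measure_pos μ hne).trans_le
      (measure_mono fun x hx => ⟨(hpos x hx).ne', hos hx⟩)
  · exact (ae_restrict_iff' hs).2 (Filter.Eventually.of_forall hnn)
  · exact hf

lemma pi_Ioo_nonempty {l r : Fin m → ℝ} (hlr : ∀ k, l k < r k) :
    (Set.univ.pi fun k => Set.Ioo (l k) (r k)).Nonempty :=
  Set.univ_pi_nonempty_iff.2 fun k => Set.nonempty_Ioo.2 (hlr k)

lemma pi_Ioo_open (l r : Fin m → ℝ) : IsOpen (Set.univ.pi fun k => Set.Ioo (l k) (r k)) :=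
  isOpen_set_pi Set.finite_univ fun _ _ => isOpen_Ioo

lemma pi_Ioo_sub (l r : Fin m → ℝ) :
    (Set.univ.pi fun k => Set.Ioo (l k) (r k)) ⊆ Set.Icc l r :=
  fun _ hx => ⟨fun k => (hx k trivial).1.le, fun k => (hx k trivial).2.le⟩

lemma sub_upper {a b : Fin m → ℝ} {i j : Fin m} (hij : i ≠ j) {p q : ℝ} (hp : a i ≤ p)
    (hq : a j ≤ q) : Set.Icc (update (update a j q) i p) b ⊆ Set.Icc a b := by
  apply Set.Icc_subset_Icc_left
  refine (le_update_self_iff.2 hq).trans (le_update_self_iff.2 ?_)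
  simpa [hij] using hp

lemma sub_lower {a b : Fin m → ℝ} {i j : Fin m} (hij : i ≠ j) {p q : ℝ} (hp : p ≤ b i)
    (hq : q ≤ b j) : Set.Icc a (update (update b j q) i p) ⊆ Set.Icc a b := by
  apply Set.Icc_subset_Icc_right
  refine le_trans (update_le_self_iff.2 ?_) (update_le_self_iff.2 hq)
  simpa [hij] using hp

lemma upd_mem {a b : Fin m → ℝ} {u v : Fin m → ℝ} (hu : u ∈ Set.Icc a b) (hv : v ∈ Set.Icc a b)
    (k : Fin m) : update u k (v k) ∈ Set.Icc a b := by
  refine ⟨fun l => ?_, fun l => ?_⟩ <;> by_cases hl : l = k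
  · subst hl; simpa using hv.1 l
  · simpa [hl] using hu.1 l
  · subst hl; simpa using hv.2 l
  · simpa [hl] using hu.2 l

/-- The main strict inequality. -/
lemma strict {a b : Fin m → ℝ} {h hi hj hij : (Fin m → ℝ) → ℝ} {i j : Fin m} (hne : i ≠ j)
    (d1 : ∀ x ∈ Set.Icc a b, DifferentiableAt ℝ h x)
    (e1 : ∀ x ∈ Set.Icc a b, fderiv ℝ h x (Pi.single i 1) = hi x)
    (e2 : ∀ x ∈ Set.Icc a b, fderiv ℝ h x (Pi.single j 1) = hj x)
    (d2 : ∀ x ∈ Set.Icc a b, DifferentiableAt ℝ hi x)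
    (e3 : ∀ x ∈ Set.Icc a b, fderiv ℝ hi x (Pi.single j 1) = hij x) (σ : ℝ)
    (hσ : ∀ x ∈ Set.Icc a b, ∀ y ∈ Set.Icc a b, ∀ z ∈ Set.Icc a b, ∀ w ∈ Set.Icc a b,
      0 < σ * (h x * hij y - hi z * hj w)) (hab : ∀ k, a k < b k) {p q : ℝ}
    (hp : p ∈ Set.Ioo (a i) (b i)) (hq : q ∈ Set.Ioo (a j) (b j)) :
    0 < σ * (subboxVol h i j a b p q true true * subboxVol h i j a b p q false false -
      subboxVol h i j a b p q false true * subboxVol h i j a b p q true false) := by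
  have hc : ContinuousOn h (Set.Icc a b) := fun x hx => (d1 x hx).continuousAt.continuousWithinAt
  set l1 := update (update a j q) i p with hl1
  set r2 := update (update b j q) i p with hr2
  have S1 : Set.Icc l1 b ⊆ Set.Icc a b := sub_upper hne hp.1.le hq.1.le
  have S2 : Set.Icc a r2 ⊆ Set.Icc a b := sub_lower hne hp.2.le hq.2.le
  have hcomp : IsCompact (Set.Icc l1 b ×ˢ Set.Icc a r2) := isCompact_Icc.prod isCompact_Icc
  have gen : ∀ f g : (Fin m → ℝ) × (Fin m → ℝ) → (Fin m → ℝ), Continuous f → Continuous g →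
      (∀ z ∈ Set.Icc a b ×ˢ Set.Icc a b, f z ∈ Set.Icc a b) →
      (∀ z ∈ Set.Icc a b ×ˢ Set.Icc a b, g z ∈ Set.Icc a b) →
      IntegrableOn (fun z => h (f z) * h (g z)) (Set.Icc l1 b ×ˢ Set.Icc a r2) := by
    intro f g hf hg mf mg
    apply ContinuousOn.integrableOn_compact hcomp
    exact (hc.comp hf.continuousOn fun z hz => mf z ⟨S1 hz.1, S2 hz.2⟩).mul
      (hc.comp hg.continuousOn fun z hz => mg z ⟨S1 hz.1, S2 hz.2⟩)
  have I0 := gen (fun z => z.1) (fun z => z.2) (by fun_prop) (by fun_prop)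
    (fun z hz => hz.1) (fun z hz => hz.2)
  have I1 := gen (fun z => update z.1 i (z.2 i)) (fun z => update z.2 i (z.1 i))
    (by fun_prop) (by fun_prop)
    (fun z hz => upd_mem hz.1 hz.2 i) (fun z hz => upd_mem hz.2 hz.1 i)
  have I2 := gen (fun z => update z.1 j (z.2 j)) (fun z => update z.2 j (z.1 j))
    (by fun_prop) (by fun_prop)
    (fun z hz => upd_mem hz.1 hz.2 j) (fun z hz => upd_mem hz.2 hz.1 j)
  have I3 := gen (fun z => update (update z.1 i (z.2 i)) j (z.2 j))
    (fun z => update (update z.2 i (z.1 i)) j (z.1 j))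
    (by fun_prop) (by fun_prop)
    (fun z hz => upd_mem (upd_mem hz.1 hz.2 i) hz.2 j)
    (fun z hz => upd_mem (upd_mem hz.2 hz.1 i) hz.1 j)
  have l1i : l1 i = p := by simp [hl1]
  have l1j : l1 j = q := by simp [hl1, hne.symm]
  have r2i : r2 i = p := by simp [hr2]
  have r2j : r2 j = q := by simp [hr2, hne.symm]
  have hlt1 : ∀ k, l1 k < b k := by
    intro k
    by_cases h1 : k = i
    · subst h1; rw [l1i]; exact hp.2
    by_cases h2 : k = j
    · subst h2; rw [l1j]; exact hq.2
    simpa [hl1, h1, h2] using hab k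
  have hlt2 : ∀ k, a k < r2 k := by
    intro k
    by_cases h1 : k = i
    · subst h1; rw [r2i]; exact hp.1
    by_cases h2 : k = j
    · subst h2; rw [r2j]; exact hq.1
    simpa [hr2, h1, h2] using hab k
  have main := int_pos (volume : Measure ((Fin m → ℝ) × (Fin m → ℝ)))
    (s := Set.Icc l1 b ×ˢ Set.Icc a r2)
    (f := fun z => σ * (h z.1 * h z.2 + h (update (update z.1 i (z.2 i)) j (z.2 j)) *
        h (update (update z.2 i (z.1 i)) j (z.1 j))
      - h (update z.1 i (z.2 i)) * h (update z.2 i (z.1 i))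
      - h (update z.1 j (z.2 j)) * h (update z.2 j (z.1 j))))
    (o := (Set.univ.pi fun k => Set.Ioo (l1 k) (b k)) ×ˢ
      (Set.univ.pi fun k => Set.Ioo (a k) (r2 k)))
    (measurableSet_Icc.prod measurableSet_Icc)
    ((((I0.add I3).sub I1).sub I2).const_mul σ)
    (by
      rintro ⟨u, v⟩ ⟨hu, hv⟩
      simp only at hu hv ⊢
      have a1 : v i ≤ u i := by
        have h1 := hu.1 i
        have h2 := hv.2 i
        rw [l1i] at h1; rw [r2i] at h2; exact h2.trans h1
      have a2 : v j ≤ u j := by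
        have h1 := hu.1 j
        have h2 := hv.2 j
        rw [l1j] at h1; rw [r2j] at h2; exact h2.trans h1
      rcases a1.lt_or_eq with a1 | a1
      · rcases a2.lt_or_eq with a2 | a2
        · exact (cross_pos hne d1 e1 e2 d2 e3 σ hσ (S1 hu) (S2 hv) a1 a2).le
        · have q1 : update u j (v j) = u := by rw [a2, update_eq_self]
          have q2 : update v j (u j) = v := by rw [← a2, update_eq_self]
          rw [update_comm hne (v i) (v j) u, update_comm hne (u i) (u j) v, q1, q2]
          apply le_of_eq
          ring
      · have q1 : update u i (v i) = u := by rw [a1, update_eq_self]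
        have q2 : update v i (u i) = v := by rw [← a1, update_eq_self]
        rw [q1, q2]
        apply le_of_eq
        ring)
    ((pi_Ioo_open _ _).prod (pi_Ioo_open _ _))
    ((pi_Ioo_nonempty hlt1).prod (pi_Ioo_nonempty hlt2))
    (Set.prod_mono (pi_Ioo_sub _ _) (pi_Ioo_sub _ _))
    (by
      rintro ⟨u, v⟩ ⟨hu, hv⟩
      simp only at hu hv ⊢
      apply cross_pos hne d1 e1 e2 d2 e3 σ hσ (S1 (pi_Ioo_sub _ _ hu)) (S2 (pi_Ioo_sub _ _ hv))
      · have h1 := (hu i trivial).1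
        have h2 := (hv i trivial).2
        simp only [l1i] at h1; simp only [r2i] at h2; exact h2.trans h1
      · have h1 := (hu j trivial).1
        have h2 := (hv j trivial).2
        simp only [l1j] at h1; simp only [r2j] at h2; exact h2.trans h1)
  have J1 : IntegrableOn (fun z : (Fin m → ℝ) × (Fin m → ℝ) =>
      h z.1 * h z.2 + h (update (update z.1 i (z.2 i)) j (z.2 j)) *
        h (update (update z.2 i (z.1 i)) j (z.1 j)))
      (Set.Icc l1 b ×ˢ Set.Icc a r2) := I0.add I3
  have J2 : IntegrableOn (fun z : (Fin m → ℝ) × (Fin m → ℝ) =>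
      h z.1 * h z.2 + h (update (update z.1 i (z.2 i)) j (z.2 j)) *
        h (update (update z.2 i (z.1 i)) j (z.1 j))
      - h (update z.1 i (z.2 i)) * h (update z.2 i (z.1 i)))
      (Set.Icc l1 b ×ˢ Set.Icc a r2) := J1.sub I1
  rw [integral_const_mul, integral_sub J2 I2, integral_sub J1 I1,
    integral_add I0 I3, ← prod_id h i j a b p q hne, ← prod_i h i j a b p q hne,
    ← prod_j h i j a b p q hne, ← prod_ij h i j a b p q hne] at main
  nlinarith

end median

/-- On an open box `U`, the nonuniformity tensor of the codimension-1
web with density `h` vanishes iff the cutting condition holds: whenever a closed box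
`K ⊆ U` is subdivided by two leaves into four subregions of `h`-volumes
`a = V_{−+}, b = V_{++}, c = V_{+−}, d = V_{−−}` with `b + a = c + d`, the equality
`b = a` forces all four volumes to be equal. -/
theorem stmt18 {m : ℕ} (hm : 2 ≤ m)
    (I : Fin m → Set ℝ) (hIopen : ∀ k, IsOpen (I k)) (hIconn : ∀ k, IsPreconnected (I k))
    (h : (Fin m → ℝ) → ℝ)
    (hsm : ContDiffOn ℝ (⊤ : ℕ∞) h (Set.univ.pi I)) (hpos : ∀ x ∈ Set.univ.pi I, 0 < h x) :
    (∀ i j : Fin m, i ≠ j → ∀ x ∈ Set.univ.pi I, logpd2 h i j x = 0) ↔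
    (∀ a b : Fin m → ℝ, Set.Icc a b ⊆ Set.univ.pi I →
      ∀ i j : Fin m, i ≠ j →
      ∀ p ∈ Set.Icc (a i) (b i), ∀ q ∈ Set.Icc (a j) (b j),
        subboxVol h i j a b p q true true + subboxVol h i j a b p q false true =
          subboxVol h i j a b p q true false + subboxVol h i j a b p q false false →
        subboxVol h i j a b p q true true = subboxVol h i j a b p q false true →
        (subboxVol h i j a b p q true true = subboxVol h i j a b p q false true ∧
         subboxVol h i j a b p q false true = subboxVol h i j a b p q true false ∧
         subboxVol h i j a b p q true false = subboxVol h i j a b p q false false)) := by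
  have hU : IsOpen (Set.univ.pi I) := isOpen_set_pi Set.finite_univ fun k _ => hIopen k
  constructor
  · intro H a b hK i j hij p hp q hq hsum heq
    have hAD : subboxVol h i j a b p q true true * subboxVol h i j a b p q false false =
        subboxVol h i j a b p q false true * subboxVol h i j a b p q true false := by
      rw [prod_id h i j a b p q hij, prod_i h i j a b p q hij]
      apply setIntegral_congr_fun (measurableSet_Icc.prod measurableSet_Icc)
      intro z hz
      exact (split_of_logpd2 I hIopen hIconn h hsm hpos i (H i)
        (hK (sub_upper hij hp.1 hq.1 hz.1)) (hK (sub_lower hij hp.2 hq.2 hz.2))).symm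
    have hD : 0 ≤ subboxVol h i j a b p q false false := by
      rw [vol_ff h i j a b p q hij]
      exact setIntegral_nonneg measurableSet_Icc fun x hx =>
        (hpos x (hK (sub_lower hij hp.2 hq.2 hx))).le
    have hC : 0 ≤ subboxVol h i j a b p q true false := by
      rw [vol_tf h i j a b p q hij]
      exact setIntegral_nonneg measurableSet_Icc fun x hx =>
        (hpos x (hK (Set.Icc_subset_Icc (le_update_self_iff.2 hp.1)
          (update_le_self_iff.2 hq.2) hx))).le
    refine ⟨heq, ?_⟩
    rw [← heq] at hAD hsum ⊢
    by_cases h0 : subboxVol h i j a b p q true true = 0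
    · constructor <;> linarith
    · have := mul_left_cancel₀ h0 hAD
      constructor <;> linarith
  · intro H i j hij x0 hx0
    by_contra hc
    obtain ⟨σ, hσ⟩ : ∃ σ, σ = logpd2 h i j x0 := ⟨_, rfl⟩
    rw [← hσ] at hc
    have hkey := logpd2_eq hU hsm hpos i j hx0
    rw [← hσ] at hkey
    set hi := fun y => fderiv ℝ h y (Pi.single i 1) with hhi
    set hj := fun y => fderiv ℝ h y (Pi.single j 1) with hhj
    set hh := fun y => fderiv ℝ hi y (Pi.single j 1) with hhh
    have si : ContDiffOn ℝ (⊤ : ℕ∞) hi (Set.univ.pi I) := contDiffOn_pd hU hsm _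
    have sj : ContDiffOn ℝ (⊤ : ℕ∞) hj (Set.univ.pi I) := contDiffOn_pd hU hsm _
    have sh : ContDiffOn ℝ (⊤ : ℕ∞) hh (Set.univ.pi I) := contDiffOn_pd hU si _
    have c0 := (diffAt hU hsm hx0).continuousAt
    have ci := (diffAt hU si hx0).continuousAt
    have cj := (diffAt hU sj hx0).continuousAt
    have ch := (diffAt hU sh hx0).continuousAt
    have hev : ∀ᶠ t : (Fin m → ℝ) × (Fin m → ℝ) × (Fin m → ℝ) × (Fin m → ℝ) in
        nhds (x0, x0, x0, x0), 0 < σ * (h t.1 * hh t.2.1 - hi t.2.2.1 * hj t.2.2.2) := by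
      have cont : ContinuousAt (fun t : (Fin m → ℝ) × (Fin m → ℝ) × (Fin m → ℝ) × (Fin m → ℝ) =>
          σ * (h t.1 * hh t.2.1 - hi t.2.2.1 * hj t.2.2.2)) (x0, x0, x0, x0) := by
        have y1 : ContinuousAt (fun t : (Fin m → ℝ) × (Fin m → ℝ) × (Fin m → ℝ) × (Fin m → ℝ) => h t.1)
            (x0, x0, x0, x0) :=
          ContinuousAt.comp (f := fun t : (Fin m → ℝ) × (Fin m → ℝ) × (Fin m → ℝ) × (Fin m → ℝ) => t.1)
            (x := (x0, x0, x0, x0)) c0 (by fun_prop)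
        have y2 : ContinuousAt (fun t : (Fin m → ℝ) × (Fin m → ℝ) × (Fin m → ℝ) × (Fin m → ℝ) => hh t.2.1)
            (x0, x0, x0, x0) :=
          ContinuousAt.comp (f := fun t : (Fin m → ℝ) × (Fin m → ℝ) × (Fin m → ℝ) × (Fin m → ℝ) => t.2.1)
            (x := (x0, x0, x0, x0)) ch (by fun_prop)
        have y3 : ContinuousAt (fun t : (Fin m → ℝ) × (Fin m → ℝ) × (Fin m → ℝ) × (Fin m → ℝ) => hi t.2.2.1)
            (x0, x0, x0, x0) :=
          ContinuousAt.comp (f := fun t : (Fin m → ℝ) × (Fin m → ℝ) × (Fin m → ℝ) × (Fin m → ℝ) => t.2.2.1)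
            (x := (x0, x0, x0, x0)) ci (by fun_prop)
        have y4 : ContinuousAt (fun t : (Fin m → ℝ) × (Fin m → ℝ) × (Fin m → ℝ) × (Fin m → ℝ) => hj t.2.2.2)
            (x0, x0, x0, x0) :=
          ContinuousAt.comp (f := fun t : (Fin m → ℝ) × (Fin m → ℝ) × (Fin m → ℝ) × (Fin m → ℝ) => t.2.2.2)
            (x := (x0, x0, x0, x0)) cj (by fun_prop)
        exact continuousAt_const.mul ((y1.mul y2).sub (y3.mul y4))
      apply cont.eventually (lt_mem_nhds _)
      have : σ * (h x0 * hh x0 - hi x0 * hj x0) = (σ * h x0) ^ 2 := by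
        linear_combination (-σ) * hkey
      simp only
      rw [this]
      have := (hpos x0 hx0).ne'
      positivity
    obtain ⟨δ1, hδ1, hb1⟩ := Metric.eventually_nhds_iff_ball.1 hev
    obtain ⟨δ2, hδ2, hb2⟩ := Metric.isOpen_iff.1 hU x0 hx0
    obtain ⟨r, hr0, hr1, hr2⟩ : ∃ r : ℝ, 0 < r ∧ r < δ1 ∧ r < δ2 := by
      refine ⟨min δ1 δ2 / 2, by positivity, ?_, ?_⟩
      · have := min_le_left δ1 δ2
        have : 0 < min δ1 δ2 := lt_min hδ1 hδ2
        linarith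
      · have := min_le_right δ1 δ2
        have : 0 < min δ1 δ2 := lt_min hδ1 hδ2
        linarith
    set a : Fin m → ℝ := fun k => x0 k - r with ha
    set b : Fin m → ℝ := fun k => x0 k + r with hb
    have hab : ∀ k, a k < b k := fun k => by simp only [ha, hb]; linarith
    have hdist : ∀ x ∈ Set.Icc a b, dist x x0 ≤ r := by
      intro x hx
      rw [dist_pi_le_iff hr0.le]
      intro k
      rw [Real.dist_eq, abs_le]
      have h1 := hx.1 k
      have h2 := hx.2 k
      simp only [ha, hb] at h1 h2
      constructor <;> linarith
    have hK : Set.Icc a b ⊆ Set.univ.pi I := fun x hx =>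
      hb2 (Metric.mem_ball.2 ((hdist x hx).trans_lt hr2))
    have hsig : ∀ x ∈ Set.Icc a b, ∀ y ∈ Set.Icc a b, ∀ z ∈ Set.Icc a b, ∀ w ∈ Set.Icc a b,
        0 < σ * (h x * hh y - hi z * hj w) := by
      intro x hx y hy z hz w hw
      apply hb1 (x, y, z, w)
      rw [Metric.mem_ball]
      refine lt_of_le_of_lt ?_ hr1
      simp only [Prod.dist_eq, max_le_iff]
      exact ⟨hdist x hx, hdist y hy, hdist z hz, hdist w hw⟩
    have hcont : ContinuousOn h (Set.Icc a b) := hsm.continuousOn.mono hK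
    have hint : IntegrableOn h (Set.Icc a b) := hcont.integrableOn_compact isCompact_Icc
    have hnn : ∀ x ∈ Set.Icc a b, 0 ≤ h x := fun x hx => (hpos x (hK hx)).le
    have hT : 0 < ∫ x in Set.Icc a b, h x :=
      int_pos volume measurableSet_Icc hint hnn (pi_Ioo_open a b) (pi_Ioo_nonempty hab)
        (pi_Ioo_sub a b) fun x hx => hpos x (hK (pi_Ioo_sub a b hx))
    obtain ⟨q, hq, hqe⟩ := median hint hnn j (hab j).le
    have sub1 : Set.Icc (Function.update a j q) b ⊆ Set.Icc a b :=
      Set.Icc_subset_Icc_left (le_update_self_iff.2 hq.1)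
    have sub2 : Set.Icc a (Function.update b j q) ⊆ Set.Icc a b :=
      Set.Icc_subset_Icc_right (update_le_self_iff.2 hq.2)
    have ai : Function.update a j q i = a i := by simp [hij]
    have bi : Function.update b j q i = b i := by simp [hij]
    obtain ⟨p, hp, hpe⟩ := median (hint.mono_set sub1) (fun x hx => hnn x (sub1 hx)) i
      (by rw [ai]; exact (hab i).le)
    have hs1 := half_add (hint.mono_set sub1) i hp
    rw [ai] at hp
    have hs2 := half_add (hint.mono_set sub2) i (p := p) (by rw [bi]; exact hp)
    have hs3 := half_add hint j hq
    rw [← vol_tt h i j a b p q hij, ← vol_ft h i j a b p q hij] at hs1 hpe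
    rw [← vol_tf h i j a b p q hij, ← vol_ff h i j a b p q hij] at hs2
    obtain ⟨k1, k2, k3⟩ := H a b hK i j hij p hp q hq (by linarith) hpe
    have n1 : subboxVol h i j a b p q true true ≠ 0 := by
      intro h0
      linarith
    have n2 : subboxVol h i j a b p q false false ≠ 0 := by
      intro h0
      linarith
    rw [vol_tt h i j a b p q hij] at n1
    rw [vol_ff h i j a b p q hij] at n2
    have p1 : a i < p := by
      by_contra hcon
      exact n2 (null_box h (i := i) (by simpa using hcon))
    have p2 : p < b i := by
      by_contra hcon
      exact n1 (null_box h (i := i) (by simpa using hcon))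
    have q1 : a j < q := by
      by_contra hcon
      exact n2 (null_box h (i := j) (by simpa [hij.symm] using hcon))
    have q2 : q < b j := by
      by_contra hcon
      exact n1 (null_box h (i := j) (by simpa [hij.symm] using hcon))
    have fin := strict hij (fun x hx => diffAt hU hsm (hK hx)) (fun _ _ => rfl) (fun _ _ => rfl)
      (fun x hx => diffAt hU si (hK hx)) (fun _ _ => rfl) σ hsig hab ⟨p1, p2⟩ ⟨q1, q2⟩
    rw [← k3, ← k2, ← k1] at fin
    simp at fin
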